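/- For all integers k >= 0, j >= 0, m >= 1, r >= 1, setting n = 2m + kj, and for all rationals t_1, ..., t_m: \sum_{P \in P_{n,k,r}^{m,j}} \prod_{i=1}^{m} t_i^{\alpha_i(P)} = (1/(m+1)) * C(m+j, m) * C(m+j+1, r) * (r!/m!) * B_{m,r}(1!t_1, 2!t_2, ...). -/

import Mathlib

open Finset

inductive Step : Type
  | u | d | h
deriving DecidableEq

/-- Lengths of maximal blocks of letters with `wt s ≠ none`, weighted by `wt`. -/
def runs (wt : Step → Option ℕ) : List Step → List ℕ
  | [] => []
  | s :: l =>
    match wt s, runs wt l with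
    | none, r => r
    | some n, r =>
      match l with
      | [] => [n]
      | s' :: _ =>
        match wt s' with
        | none => n :: r
        | some _ =>
          match r with
          | a :: rest => (n + a) :: rest
          | [] => [n]

def uRuns : List Step → List ℕ :=
  runs (fun s => match s with | Step.u => some 1 | _ => none)

def uhRuns (k : ℕ) : List Step → List ℕ :=
  runs (fun s => match s with | Step.u => some 1 | Step.h => some k | Step.d => none)

def alpha (i : ℕ) (w : List Step) : ℕ := (uRuns w).count i

def beta (i : ℕ) (w : List Step) : ℕ := (uRuns w).tail.count i

def IsNonneg (w : List Step) : Prop :=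
  ∀ i : ℕ, (w.take i).count Step.d ≤ (w.take i).count Step.u

def pathSet (m j : ℕ) : Set (List Step) :=
  {w | w.count Step.u = m ∧ w.count Step.d = m ∧ w.count Step.h = j ∧ IsNonneg w}

/-- no horizontal step lies on the x-axis -/
def NoLowH (w : List Step) : Prop :=
  ∀ (i : ℕ) (hi : i < w.length), w[i]'hi = Step.h →
    (w.take i).count Step.u ≠ (w.take i).count Step.d

def qSet (m j : ℕ) : Set (List Step) :=
  {w | w ∈ pathSet m j ∧ NoLowH w}

/-- normalized partial Bell polynomial (r!/m!) B_{m,r}(1!t₁,2!t₂,…) -/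
def bellNorm (m r : ℕ) (t : ℕ → ℚ) : ℚ :=
  ∑ f : Fin m → Fin (m + 1),
    if (∑ i : Fin m, (f i : ℕ)) = r ∧ (∑ i : Fin m, ((i : ℕ) + 1) * (f i : ℕ)) = m then
      (r.factorial : ℚ) / (∏ i : Fin m, ((f i : ℕ).factorial : ℚ)) * ∏ i : Fin m, t ((i : ℕ) + 1) ^ (f i : ℕ)
    else 0

/-- normalized potential polynomial  P_p^{(lam)}(1!t₁,2!t₂,…)/p! -/
def potential (lam p : ℕ) (t : ℕ → ℚ) : ℚ :=
  ∑ r ∈ Finset.range (p + 1), (Nat.choose lam r : ℚ) * bellNorm p r t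


/-! ### The power series coefficients -/

/-- The power series of the weights. -/
noncomputable def tau (t : ℕ → ℚ) : PowerSeries ℚ :=
  PowerSeries.mk fun i => if i = 0 then 0 else t i

noncomputable def cc (t : ℕ → ℚ) (m r : ℕ) : ℚ := PowerSeries.coeff m (tau t ^ r)

theorem cc_zero (t : ℕ → ℚ) (m : ℕ) : cc t m 0 = if m = 0 then 1 else 0 := by
  simp [cc, PowerSeries.coeff_one]

theorem cc_succ (t : ℕ → ℚ) (m r : ℕ) :
    ∑ a ∈ range m, t (a + 1) * cc t (m - (a + 1)) r = cc t m (r + 1) := by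
  unfold cc
  rw [pow_succ', PowerSeries.coeff_mul,
    Finset.Nat.sum_antidiagonal_eq_sum_range_succ_mk, Finset.sum_range_succ']
  simp [tau]

theorem cc_deriv (t : ℕ → ℚ) (m r : ℕ) :
    ((r : ℚ) + 1) * ∑ a ∈ range m, ((a : ℚ) + 1) * (t (a + 1) * cc t (m - (a + 1)) r) =
      m * cc t m (r + 1) := by
  cases m with
  | zero => simp
  | succ m =>
    have h : PowerSeries.coeff m (PowerSeries.derivative ℚ (tau t ^ (r + 1))) =
        PowerSeries.coeff m (((r + 1 : ℕ) : PowerSeries ℚ) *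
          (PowerSeries.derivative ℚ (tau t) * tau t ^ r)) := by
      rw [Derivation.leibniz_pow]
      simp [nsmul_eq_mul, mul_comm]
    rw [PowerSeries.coeff_derivative] at h
    rw [← nsmul_eq_mul, map_nsmul, PowerSeries.coeff_mul,
      Finset.Nat.sum_antidiagonal_eq_sum_range_succ_mk] at h
    simp only [PowerSeries.coeff_derivative, nsmul_eq_mul] at h
    unfold cc
    push_cast at h ⊢
    rw [mul_comm] at h
    rw [h]
    congr 1
    refine Finset.sum_congr rfl fun a ha => ?_
    simp [tau]
    ring

/-! ### Closed forms -/

noncomputable def EE (t : ℕ → ℚ) (q m j r : ℕ) : ℚ :=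
  ((q : ℚ) + 1) / (m + q + j + 1) * (m + q + j + 1).choose j * (m + q + j + 1).choose r * cc t m r

def closeRun (t : ℕ → ℚ) (c : ℕ) (g : ℕ → ℚ) (r : ℕ) : ℚ :=
  if c = 0 then g r else if r = 0 then 0 else t c * g (r - 1)

/-- contribution of what follows a maximal run of up steps -/
noncomputable def KK (t : ℕ → ℚ) (q m j r : ℕ) : ℚ :=
  (if q = 0 then 0 else EE t (q - 1) m j r) + (if j = 0 then 0 else EE t q m (j - 1) r)
    + (if q = 0 ∧ m = 0 ∧ j = 0 ∧ r = 0 then 1 else 0)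

theorem KK_eq (t : ℕ → ℚ) (q m j r N : ℕ) (hN : m + q + j = N) (h0 : 0 < N) :
    KK t q m j r = (N + 1).choose j * ((q : ℚ) * (N + 1) + j) / ((N + 1) * N) * N.choose r * cc t m r := by
  have hNq : (N : ℚ) ≠ 0 := by positivity
  have hN1 : (N : ℚ) + 1 ≠ 0 := by positivity
  have h1 : (if q = 0 then 0 else EE t (q - 1) m j r) =
      (q : ℚ) / N * N.choose j * N.choose r * cc t m r := by
    cases q with
    | zero => simp
    | succ q =>
      have e : m + q + j + 1 = N := by omega
      have e2 : (m : ℚ) + q + j + 1 = N := by exact_mod_cast e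
      simp [EE, e, e2]
  have h2 : (if j = 0 then 0 else EE t q m (j - 1) r) =
      ((q : ℚ) + 1) / N * (((N + 1).choose j : ℚ) - N.choose j) * N.choose r * cc t m r := by
    cases j with
    | zero => simp
    | succ j =>
      have e : m + q + j + 1 = N := by omega
      have e2 : (m : ℚ) + q + j + 1 = N := by exact_mod_cast e
      simp [EE, e, e2, Nat.choose_succ_succ]
  have h3 : ((N : ℚ) + 1) * (((N + 1).choose j : ℚ) - N.choose j) = j * (N + 1).choose j := by
    cases j with
    | zero => simp
    | succ j =>
      have := Nat.add_one_mul_choose_eq N j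
      have e : ((N : ℚ) + 1) * N.choose j = (N + 1).choose (j + 1) * (j + 1) := by exact_mod_cast this
      have e' : ((N + 1).choose (j + 1) : ℚ) = N.choose j + N.choose (j + 1) := by
        exact_mod_cast Nat.choose_succ_succ N j
      push_cast
      rw [e'] at e ⊢
      linear_combination e
  have h4 : ¬ (q = 0 ∧ m = 0 ∧ j = 0 ∧ r = 0) := by omega
  unfold KK
  rw [h1, h2, if_neg h4]
  field_simp
  linear_combination (N.choose r : ℚ) * cc t m r * h3

theorem EE_key (t : ℕ → ℚ) (q m j r : ℕ) :
    ∑ a ∈ range (m + 1), closeRun t a (KK t (q + a) (m - a) j) r = EE t q m j r := by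
  rw [Finset.sum_range_succ']
  rcases Nat.eq_zero_or_pos (m + q + j) with h0 | h0
  · obtain ⟨rfl, rfl, rfl⟩ : m = 0 ∧ q = 0 ∧ j = 0 := by omega
    simp only [Finset.range_zero, Finset.sum_empty, closeRun, KK, EE]
    rcases r with _ | _ | r
    · simp [cc_zero]
    · have := cc_succ t 0 0
      simp at this
      simp [← this]
    · simp [Nat.choose_eq_zero_of_lt (show 1 < r + 1 + 1 by omega)]
  · obtain ⟨N, hN⟩ : ∃ N, m + q + j = N := ⟨_, rfl⟩
    rw [hN] at h0
    have hNq : (N : ℚ) ≠ 0 := by positivity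
    have hN1 : (N : ℚ) + 1 ≠ 0 := by positivity
    have hNc : (m : ℚ) + q + j = N := by exact_mod_cast hN
    have e0 : closeRun t 0 (KK t (q + 0) (m - 0) j) r =
      (N + 1).choose j * ((q : ℚ) * (N + 1) + j) / ((N + 1) * N) * N.choose r * cc t m r := by
      simp [closeRun, KK_eq t q m j r N hN h0]
    have eE : EE t q m j r = ((q : ℚ) + 1) / (N + 1) * (N + 1).choose j * (N + 1).choose r * cc t m r := by
      simp [EE, hN, hNc]
    rw [e0, eE]
    cases r with
    | zero =>
      simp only [closeRun]
      simp only [cc_zero]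
      rcases Nat.eq_zero_or_pos m with rfl | hm
      · simp
        simp at hNc
        field_simp
        rw [← hNc]; ring
      · simp [hm.ne']
    | succ r =>
      have e1 : ∀ a ∈ range m, closeRun t (a + 1) (KK t (q + (a + 1)) (m - (a + 1)) j) (r + 1) =
          (N + 1).choose j * N.choose r / ((N + 1) * N) *
          (((q : ℚ) * (N + 1) + j) * (t (a + 1) * cc t (m - (a + 1)) r) +
            (N + 1) * (((a : ℚ) + 1) * (t (a + 1) * cc t (m - (a + 1)) r))) := by
        intro a ha
        have ha' := Finset.mem_range.1 ha
        simp only [closeRun, Nat.add_sub_cancel, Nat.add_eq_zero_iff, one_ne_zero, and_false, if_false]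
        rw [KK_eq t (q + (a + 1)) (m - (a + 1)) j r N (by omega) h0]
        push_cast
        field_simp
        ring
      rw [Finset.sum_congr rfl e1, ← Finset.mul_sum, Finset.sum_add_distrib, ← Finset.mul_sum,
        ← Finset.mul_sum, cc_succ]
      have hd := cc_deriv t m r
      set D := ∑ a ∈ range m, ((a : ℚ) + 1) * (t (a + 1) * cc t (m - (a + 1)) r)
      have hr : (r : ℚ) + 1 ≠ 0 := by positivity
      have hD : D = m * cc t m (r + 1) / (r + 1) := by
        rw [eq_div_iff hr, ← hd]; ring
      have hc : ((N : ℚ) + 1) * N.choose r = (N + 1).choose (r + 1) * (r + 1) := by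
        exact_mod_cast Nat.add_one_mul_choose_eq N r
      have hc' : ((N + 1).choose (r + 1) : ℚ) = N.choose r + N.choose (r + 1) := by
        exact_mod_cast Nat.choose_succ_succ N r
      have hc2 : (N.choose r : ℚ) = (N + 1).choose (r + 1) * (r + 1) / (N + 1) := by
        rw [eq_div_iff hN1, ← hc]; ring
      have hc3 : (N.choose (r + 1) : ℚ) = (N + 1).choose (r + 1) - (N + 1).choose (r + 1) * (r + 1) / (N + 1) := by
        rw [← hc2, hc']; ring
      rw [hD, hc3, hc2]
      field_simp
      rw [← hNc]
      ring

/-! ### Words -/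

def words : ℕ → Finset (List Step)
  | 0 => {[]}
  | L + 1 => (words L).image (List.cons Step.u) ∪ (words L).image (List.cons Step.d) ∪
      (words L).image (List.cons Step.h)

theorem mem_words (L : ℕ) (w : List Step) : w ∈ words L ↔ w.length = L := by
  induction L generalizing w with
  | zero => simp [words]
  | succ L ih =>
    cases w with
    | nil => simp [words]
    | cons s l => cases s <;> simp [words, ih]

theorem sum_words_succ (L : ℕ) (f : List Step → ℚ) :
    ∑ w ∈ words (L + 1), f w = ∑ w ∈ words L, f (Step.u :: w) + ∑ w ∈ words L, f (Step.d :: w) +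
      ∑ w ∈ words L, f (Step.h :: w) := by
  rw [words, Finset.sum_union, Finset.sum_union, Finset.sum_image, Finset.sum_image, Finset.sum_image]
  all_goals first
    | (intro a _ b _ h; simpa using h)
    | (rw [Finset.disjoint_left]; intro a; simp; try aesop)

/-- weight of a word with a pending run of length `c`, starting at height `q` -/
def wval (t : ℕ → ℚ) : List Step → ℕ → ℕ → ℕ → ℕ → ℕ → ℚ
  | [], c, q, m, j, r => closeRun t c (fun r => if q = 0 ∧ m = 0 ∧ j = 0 ∧ r = 0 then 1 else 0) r
  | Step.u :: l, c, q, m, j, r => if m = 0 then 0 else wval t l (c + 1) (q + 1) (m - 1) j r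
  | Step.d :: l, c, q, m, j, r => if q = 0 then 0 else closeRun t c (fun r => wval t l 0 (q - 1) m j r) r
  | Step.h :: l, c, q, m, j, r => if j = 0 then 0 else closeRun t c (fun r => wval t l 0 q m (j - 1) r) r

theorem sum_closeRun {ι : Type*} (s : Finset ι) (t : ℕ → ℚ) (c r : ℕ) (g : ι → ℕ → ℚ) :
    ∑ i ∈ s, closeRun t c (g i) r = closeRun t c (fun r => ∑ i ∈ s, g i r) r := by
  unfold closeRun
  split_ifs <;> simp [Finset.mul_sum]

theorem closeRun_add (t : ℕ → ℚ) (c r : ℕ) (g h : ℕ → ℚ) :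
    closeRun t c (fun r => g r + h r) r = closeRun t c g r + closeRun t c h r := by
  unfold closeRun
  split_ifs <;> ring

theorem closeRun_zero (t : ℕ → ℚ) (c r : ℕ) :
    closeRun t c (fun _ => 0) r = 0 := by
  unfold closeRun
  split_ifs <;> ring

theorem sum_val (t : ℕ → ℚ) (L : ℕ) : ∀ c q m j r : ℕ, 2 * m + q + j = L →
    ∑ w ∈ words L, wval t w c q m j r =
      ∑ a ∈ range (m + 1), closeRun t (c + a) (KK t (q + a) (m - a) j) r := by
  induction L with
  | zero =>
    intro c q m j r h
    obtain ⟨rfl, rfl, rfl⟩ : m = 0 ∧ q = 0 ∧ j = 0 := by omega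
    simp only [words, Finset.sum_singleton, wval]
    simp
    congr 1
    funext r
    simp [KK]
  | succ L ih =>
    intro c q m j r h
    have hE : ∀ q m j r : ℕ, 2 * m + q + j = L → ∑ w ∈ words L, wval t w 0 q m j r = EE t q m j r := by
      intro q m j r h
      rw [ih 0 q m j r h, ← EE_key]
      simp
    rw [sum_words_succ, Finset.sum_range_succ']
    have hu : ∑ w ∈ words L, wval t (Step.u :: w) c q m j r =
        ∑ a ∈ range m, closeRun t (c + (a + 1)) (KK t (q + (a + 1)) (m - (a + 1)) j) r := by
      cases m with
      | zero => simp [wval]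
      | succ m =>
        simp only [wval, Nat.add_eq_zero_iff, one_ne_zero, and_false, if_false, Nat.add_sub_cancel]
        rw [ih (c + 1) (q + 1) m j r (by omega)]
        refine Finset.sum_congr rfl fun a ha => ?_
        rw [show c + 1 + a = c + (a + 1) by ring, show q + 1 + a = q + (a + 1) by ring,
          show m + 1 - (a + 1) = m - a by omega]
    have hd : ∑ w ∈ words L, wval t (Step.d :: w) c q m j r =
        closeRun t c (fun r => if q = 0 then 0 else EE t (q - 1) m j r) r := by
      cases q with
      | zero => simp [wval, closeRun_zero]
      | succ q =>
        simp only [wval, Nat.add_eq_zero_iff, one_ne_zero, and_false, if_false, Nat.add_sub_cancel]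
        rw [sum_closeRun]
        congr 1
        funext r
        exact hE _ _ _ _ (by omega)
    have hh : ∑ w ∈ words L, wval t (Step.h :: w) c q m j r =
        closeRun t c (fun r => if j = 0 then 0 else EE t q m (j - 1) r) r := by
      cases j with
      | zero => simp [wval, closeRun_zero]
      | succ q =>
        simp only [wval, Nat.add_eq_zero_iff, one_ne_zero, and_false, if_false, Nat.add_sub_cancel]
        rw [sum_closeRun]
        congr 1
        funext r
        exact hE _ _ _ _ (by omega)
    rw [hu, hd, hh, add_assoc, ← closeRun_add]
    congr 1
    simp only [Nat.add_zero, Nat.sub_zero]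
    congr 1
    funext r
    have : ¬ (q = 0 ∧ m = 0 ∧ j = 0 ∧ r = 0) := by omega
    simp [KK, this]

/-! ### Relating `val` to runs -/

theorem uRuns_nil : uRuns [] = [] := rfl

theorem uRuns_d (l : List Step) : uRuns (Step.d :: l) = uRuns l := by
  simp [uRuns, runs]

theorem uRuns_h (l : List Step) : uRuns (Step.h :: l) = uRuns l := by
  simp [uRuns, runs]

def pre (c : ℕ) (l : List ℕ) : List ℕ := if c = 0 then l else c :: l

theorem uRuns_rep_nil (c : ℕ) : uRuns (List.replicate c Step.u) = pre c [] := by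
  induction c with
  | zero => rfl
  | succ c ih =>
    cases c with
    | zero => rfl
    | succ c =>
      simp only [pre, uRuns, List.replicate_succ] at ih ⊢
      rw [runs]
      simp [ih]
      omega

theorem uRuns_rep_cons (c : ℕ) (s : Step) (hs : s ≠ Step.u) (l : List Step) :
    uRuns (List.replicate c Step.u ++ s :: l) = pre c (uRuns l) := by
  induction c with
  | zero => cases s <;> simp_all [pre, uRuns_d, uRuns_h]
  | succ c ih =>
    cases c with
    | zero => cases s <;> simp_all [pre, uRuns, runs]
    | succ c =>
      simp only [pre, uRuns, List.replicate_succ, List.cons_append] at ih ⊢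
      rw [runs]
      simp [ih]
      omega

def NN (q : ℕ) (w : List Step) : Prop :=
  ∀ i : ℕ, (w.take i).count Step.d ≤ (w.take i).count Step.u + q

theorem NN_nil (q : ℕ) : NN q [] := by intro i; simp

theorem NN_u (q : ℕ) (w : List Step) : NN q (Step.u :: w) ↔ NN (q + 1) w := by
  constructor
  · intro h i
    have := h (i + 1)
    simp at this
    omega
  · intro h i
    cases i with
    | zero => simp
    | succ i =>
      have := h i
      simp
      omega

theorem NN_h (q : ℕ) (w : List Step) : NN q (Step.h :: w) ↔ NN q w := by
  constructor
  · intro h i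
    have := h (i + 1)
    simp at this
    omega
  · intro h i
    cases i with
    | zero => simp
    | succ i =>
      have := h i
      simp
      omega

theorem NN_d (q : ℕ) (w : List Step) : NN q (Step.d :: w) ↔ q ≠ 0 ∧ NN (q - 1) w := by
  constructor
  · intro h
    have h1 := h 1
    simp at h1
    refine ⟨by omega, fun i => ?_⟩
    have := h (i + 1)
    simp at this
    omega
  · rintro ⟨hq, h⟩ i
    cases i with
    | zero => simp
    | succ i =>
      have := h i
      simp
      omega

def Good (q m j : ℕ) (w : List Step) : Prop :=
  w.count Step.u = m ∧ w.count Step.d = m + q ∧ w.count Step.h = j ∧ NN q w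

open Classical in
theorem closeRun_ite (t : ℕ → ℚ) (c r : ℕ) (p : Prop) (l : List ℕ) :
    closeRun t c (fun r => if p ∧ l.length = r then (l.map t).prod else 0) r =
      if p ∧ (pre c l).length = r then ((pre c l).map t).prod else 0 := by
  unfold closeRun pre
  rcases Nat.eq_zero_or_pos c with rfl | hc
  · simp
  · cases r with
    | zero => simp [hc.ne']
    | succ r => simp [hc.ne']

open Classical in
theorem val_eq (t : ℕ → ℚ) (w : List Step) : ∀ c q m j r : ℕ,
    wval t w c q m j r = if Good q m j w ∧ (uRuns (List.replicate c Step.u ++ w)).length = r then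
      ((uRuns (List.replicate c Step.u ++ w)).map t).prod else 0 := by
  induction w with
  | nil =>
    intro c q m j r
    rw [List.append_nil, uRuns_rep_nil, ← closeRun_ite, wval]
    congr 1
    funext r
    have : (q = 0 ∧ m = 0 ∧ j = 0 ∧ r = 0) ↔ (Good q m j [] ∧ ([] : List ℕ).length = r) := by
      simp [Good, NN_nil]
      omega
    simp [this]
  | cons s l ih =>
    intro c q m j r
    cases s with
    | u =>
      have e : List.replicate c Step.u ++ Step.u :: l = List.replicate (c + 1) Step.u ++ l := by
        simp [List.replicate_succ', List.append_assoc]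
      rw [e, wval, ih]
      cases m with
      | zero => simp [Good]
      | succ m =>
        have : Good q (m + 1) j (Step.u :: l) ↔ Good (q + 1) m j l := by
          simp [Good, NN_u]
          intros
          omega
        simp [this]
    | d =>
      rw [uRuns_rep_cons c _ (by simp), ← closeRun_ite, wval]
      simp only [ih]
      cases q with
      | zero => simp [Good, NN_d, closeRun_zero]
      | succ q =>
        have : Good (q + 1) m j (Step.d :: l) ↔ Good q m j l := by
          simp [Good, NN_d]
          intros
          omega
        simp [this]
    | h =>
      rw [uRuns_rep_cons c _ (by simp), ← closeRun_ite, wval]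
      simp only [ih]
      cases j with
      | zero => simp [Good, closeRun_zero]
      | succ j =>
        have : Good q m (j + 1) (Step.h :: l) ↔ Good q m j l := by
          simp [Good, NN_h]
        simp [this]

theorem pre_sum (c : ℕ) (l : List ℕ) : (pre c l).sum = c + l.sum := by
  unfold pre; split_ifs with h <;> simp [h]

theorem pre_pos (c : ℕ) (l : List ℕ) (h : ∀ x ∈ l, 1 ≤ x) : ∀ x ∈ pre c l, 1 ≤ x := by
  unfold pre; split_ifs with hc
  · exact h
  · intro x hx
    rcases List.mem_cons.1 hx with rfl | hx
    · omega
    · exact h x hx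

theorem uRuns_facts (w : List Step) : ∀ c : ℕ,
    (uRuns (List.replicate c Step.u ++ w)).sum = c + w.count Step.u ∧
    ∀ x ∈ uRuns (List.replicate c Step.u ++ w), 1 ≤ x := by
  induction w with
  | nil =>
    intro c
    rw [List.append_nil, uRuns_rep_nil, pre_sum]
    exact ⟨by simp, pre_pos _ _ (by simp)⟩
  | cons s l ih =>
    intro c
    by_cases hs : s = Step.u
    · subst hs
      have e : List.replicate c Step.u ++ Step.u :: l = List.replicate (c + 1) Step.u ++ l := by
        simp [List.replicate_succ', List.append_assoc]
      rw [e]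
      refine ⟨?_, (ih _).2⟩
      rw [(ih _).1]
      simp
      omega
    · rw [uRuns_rep_cons c _ hs, pre_sum]
      have := ih 0
      simp only [List.replicate_zero, List.nil_append] at this
      refine ⟨?_, pre_pos _ _ this.2⟩
      rw [this.1, List.count_cons_of_ne hs]
      simp

theorem prod_alpha (t : ℕ → ℚ) (m : ℕ) (w : List Step) (h : w.count Step.u = m) :
    ∏ i ∈ Finset.Icc 1 m, t i ^ alpha i w = ((uRuns w).map t).prod := by
  have hf := uRuns_facts w 0
  simp only [List.replicate_zero, List.nil_append, Nat.zero_add] at hf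
  rw [Finset.prod_list_map_count]
  symm
  refine Finset.prod_subset ?_ ?_
  · intro x hx
    have hx := List.mem_toFinset.1 hx
    have h1 := hf.2 x hx
    have h2 := List.le_sum_of_mem hx
    rw [Finset.mem_Icc]
    omega
  · intro x _ hx
    have : (uRuns w).count x = 0 := List.count_eq_zero.2 (fun h => hx (List.mem_toFinset.2 h))
    rw [this, pow_zero]

theorem word_length (w : List Step) :
    w.length = w.count Step.u + w.count Step.d + w.count Step.h := by
  induction w with
  | nil => simp
  | cons s l ih => cases s <;> simp <;> omega

/-! ### Bell polynomial -/

theorem cc_congr (t t' : ℕ → ℚ) (m r : ℕ) (h : ∀ i, 1 ≤ i → i ≤ m → t i = t' i) :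
    cc t m r = cc t' m r := by
  induction r generalizing m with
  | zero => simp [cc_zero]
  | succ r ih =>
    rw [← cc_succ, ← cc_succ]
    refine Finset.sum_congr rfl fun a ha => ?_
    have ha := Finset.mem_range.1 ha
    rw [h (a + 1) (by omega) (by omega), ih _ (fun i h1 h2 => h i h1 (by omega))]

theorem tau_trunc (t : ℕ → ℚ) (m : ℕ) :
    tau (fun i => if i ≤ m then t i else 0) =
      ∑ i : Fin m, PowerSeries.monomial ((i : ℕ) + 1) (t ((i : ℕ) + 1)) := by
  ext n
  simp only [map_sum]
  simp only [PowerSeries.coeff_monomial, tau, PowerSeries.coeff_mk]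
  rw [Fin.sum_univ_eq_sum_range (fun i => if n = i + 1 then t (i + 1) else 0)]
  cases n with
  | zero => simp
  | succ n =>
    by_cases h : n < m
    · have h' : n + 1 ≤ m := h
      simp [h, h']
    · have h' : ¬ n + 1 ≤ m := h
      simp [h, h']

theorem prod_monomial (m : ℕ) (s : Finset (Fin m)) (t : ℕ → ℚ) (k : Fin m → ℕ) :
    ∏ i ∈ s, (PowerSeries.monomial ((i : ℕ) + 1) (t ((i : ℕ) + 1))) ^ k i =
      PowerSeries.monomial (∑ i ∈ s, ((i : ℕ) + 1) * k i) (∏ i ∈ s, t ((i : ℕ) + 1) ^ k i) := by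
  classical
  induction s using Finset.induction_on with
  | empty => simp [PowerSeries.monomial_zero_eq_C]
  | insert a s ha ih =>
    rw [Finset.prod_insert ha, Finset.prod_insert ha, Finset.sum_insert ha, ih,
      PowerSeries.monomial_pow, PowerSeries.monomial_mul_monomial, mul_comm (k a)]

theorem cc_eq_bell (t : ℕ → ℚ) (m r : ℕ) : cc t m r = bellNorm m r t := by
  rw [cc_congr t (fun i => if i ≤ m then t i else 0) m r (fun i _ h => by simp [h])]
  unfold cc bellNorm
  rw [tau_trunc, Finset.sum_pow_eq_sum_piAntidiag, map_sum]
  have h1 : ∀ k ∈ Finset.piAntidiag (univ : Finset (Fin m)) r,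
      PowerSeries.coeff m (((Nat.multinomial univ k : ℕ) : PowerSeries ℚ) *
        ∏ i : Fin m, (PowerSeries.monomial ((i : ℕ) + 1) (t ((i : ℕ) + 1))) ^ k i) =
      if (∑ i : Fin m, ((i : ℕ) + 1) * k i) = m then
        (r.factorial : ℚ) / (∏ i : Fin m, ((k i).factorial : ℚ)) * ∏ i : Fin m, t ((i : ℕ) + 1) ^ k i
      else 0 := by
    intro k hk
    rw [prod_monomial, ← nsmul_eq_mul, map_nsmul, PowerSeries.coeff_monomial, nsmul_eq_mul]
    have hk := (Finset.mem_piAntidiag.1 hk).1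
    have hs := Nat.multinomial_spec univ k
    rw [hk] at hs
    have hs' : (∏ i : Fin m, ((k i).factorial : ℚ)) * (Nat.multinomial univ k : ℚ) = r.factorial := by
      exact_mod_cast hs
    have h0 : (∏ i : Fin m, ((k i).factorial : ℚ)) ≠ 0 := by
      rw [Finset.prod_ne_zero_iff]; intro i _; positivity
    rw [← hs', mul_div_cancel_left₀ _ h0]
    by_cases h : (∑ i : Fin m, ((i : ℕ) + 1) * k i) = m
    · simp [h]
    · rw [if_neg h, if_neg (fun h' => h h'.symm), mul_zero]
  rw [Finset.sum_congr rfl h1, ← Finset.sum_filter, ← Finset.sum_filter]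
  symm
  refine Finset.sum_bij (fun f _ i => (f i : ℕ)) ?_ ?_ ?_ ?_
  · intro f hf
    simp only [Finset.mem_filter, Finset.mem_univ, true_and] at hf
    simp only [Finset.mem_filter, Finset.mem_piAntidiag]
    exact ⟨⟨hf.1, fun _ _ => Finset.mem_univ _⟩, hf.2⟩
  · intro f _ g _ h
    funext i
    exact Fin.ext (congrFun h i)
  · intro k hk
    simp only [Finset.mem_filter, Finset.mem_piAntidiag] at hk
    have hb : ∀ i, k i < m + 1 := by
      intro i
      have h1 : ((i : ℕ) + 1) * k i ≤ ∑ i : Fin m, ((i : ℕ) + 1) * k i :=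
        Finset.single_le_sum (f := fun i : Fin m => ((i : ℕ) + 1) * k i)
          (fun _ _ => Nat.zero_le _) (Finset.mem_univ i)
      rw [hk.2] at h1
      nlinarith [Nat.zero_le ((i : ℕ) * k i)]
    refine ⟨fun i => ⟨k i, hb i⟩, ?_, rfl⟩
    simp only [Finset.mem_filter, Finset.mem_univ, true_and]
    exact ⟨hk.1.1, hk.2⟩
  · intro f _
    rfl

theorem stmt2 (k j m r : ℕ) (hm : 1 ≤ m) (hr : 1 ≤ r) (t : ℕ → ℚ) :
    (∑ᶠ w ∈ {w ∈ pathSet m j | (uRuns w).length = r},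
        ∏ i ∈ Finset.Icc 1 m, t i ^ alpha i w) =
      (1 : ℚ) / (m + 1) * Nat.choose (m + j) m * Nat.choose (m + j + 1) r *
        bellNorm m r t := by
  classical
  have hG : ∀ w, w ∈ pathSet m j ↔ Good 0 m j w := by
    intro w
    simp [pathSet, Good, IsNonneg, NN]
  have hset : {w ∈ pathSet m j | (uRuns w).length = r} =
      (((words (2 * m + 0 + j)).filter (fun w => Good 0 m j w ∧ (uRuns w).length = r) :
        Finset (List Step)) : Set (List Step)) := by
    ext w
    simp only [Set.mem_ofPred_eq, hG, Finset.coe_filter, mem_words]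
    constructor
    · intro h
      refine ⟨?_, h⟩
      have := word_length w
      obtain ⟨⟨h1, h2, h3, _⟩, _⟩ := h
      omega
    · exact fun h => h.2
  rw [hset, finsum_mem_coe_finset]
  have e1 : ∑ w ∈ (words (2 * m + 0 + j)).filter (fun w => Good 0 m j w ∧ (uRuns w).length = r),
      ∏ i ∈ Finset.Icc 1 m, t i ^ alpha i w = ∑ w ∈ words (2 * m + 0 + j), wval t w 0 0 m j r := by
    rw [Finset.sum_filter]
    refine Finset.sum_congr rfl fun w _ => ?_
    rw [val_eq]
    simp only [List.replicate_zero, List.nil_append]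
    split_ifs with h
    · exact prod_alpha t m w h.1.1
    · rfl
  rw [e1, sum_val t _ 0 0 m j r rfl]
  simp only [Nat.zero_add]
  have e2 := EE_key t 0 m j r
  simp only [Nat.zero_add] at e2
  rw [e2, EE, cc_eq_bell]
  have e3 : ((m + j + 1 : ℕ) : ℚ) * (m + j).choose m = (m + j + 1).choose j * ((m : ℚ) + 1) := by
    have := Nat.add_one_mul_choose_eq (m + j) m
    rw [show (m + j + 1).choose (m + 1) = (m + j + 1).choose j from
      Nat.choose_symm_of_eq_add (by ring)] at this
    exact_mod_cast this
  push_cast at e3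
  have h1 : (m : ℚ) + 1 ≠ 0 := by positivity
  have h2 : (m : ℚ) + j + 1 ≠ 0 := by positivity
  simp only [Nat.add_zero, Nat.cast_zero, add_zero, zero_add]
  congr 2
  field_simp
  linear_combination -e3
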